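/- Let q be a prime power, let n > k ≥ 1 be integers, and let 𝓕 be a maximal intersecting family of k-dimensional subspaces of 𝔽_q^n. Then there exists a subfamily 𝓕₀ ⊆ 𝓕 with |𝓕₀| ≤ binom(2k−1, k−1) such that 𝓕 = {W : W is a k-dimensional subspace of 𝔽_q^n with dim(W ∩ U) ≥ 1 for all U ∈ 𝓕₀}. -/

import Mathlib

/-- A family of subspaces is intersecting if any two of its members meet in a
subspace of dimension at least 1. -/
def IsIntersectingFam {K : Type*} [Field K] {n : ℕ}
    (𝓕 : Finset (Submodule K (Fin n → K))) : Prop :=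
  ∀ U ∈ 𝓕, ∀ V ∈ 𝓕, 1 ≤ Module.finrank K ↥(U ⊓ V)

/-!
Let `φ : V → L²ᵏ` be a generic linear map over a purely transcendental extension `L` of the ground
field, and represent a `k`-dimensional subspace `U` with basis `u` by
`p U = φ u₁ ∧ ⋯ ∧ φ uₖ ∈ ⋀ᵏ L²ᵏ`. Since `φ` keeps every linearly independent `2k`-tuple independent,
the form `B x y = det (x ∧ y)` satisfies `B (p U) (p W) = 0` exactly when `U` and `W` meet
nontrivially.

The vectors `p U`, for `U` in an intersecting family, thus span a `B`-isotropic subspace `S`, and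
`B S` annihilates `S`, so `2 dim (B S) ≤ dim ⋀ᵏ L²ᵏ = binom(2k, k) = 2 binom(2k - 1, k - 1)`.
A subfamily whose functionals `B (p U)` form a basis of `B S` has at most `binom(2k - 1, k - 1)`
members, and a `k`-dimensional subspace meeting all of them meets the whole family.
-/

open Module Submodule

section BilinearForms

variable {K E ι : Type*} [Field K] [AddCommGroup E] [Module K E] [FiniteDimensional K E]

theorem exists_finset_card_eq_finrank_span_image_eq (f : ι → E) :
    ∃ s : Finset ι, s.card = finrank K (span K (Set.range f)) ∧
      span K (f '' s) = span K (Set.range f) := by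
  classical
  obtain ⟨t, ht, hcard, hspan, -⟩ := exists_finset_span_eq_linearIndepOn K (Set.range f)
  obtain ⟨s, -, hinj, rfl⟩ := Finset.exists_subset_injOn_image_eq_of_surjOn Set.univ t
    (by rwa [Set.SurjOn, Set.image_univ])
  exact ⟨s, by rw [← hcard, Finset.card_image_of_injOn hinj], by rw [← hspan, Finset.coe_image]⟩

theorem two_mul_finrank_map_le_of_isotropic (B : LinearMap.BilinForm K E) (S : Submodule K E)
    (hS : ∀ x ∈ S, ∀ y ∈ S, B x y = 0) : 2 * finrank K (S.map B) ≤ finrank K E := by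
  have hann : S.map B ≤ S.dualAnnihilator := by
    rintro _ ⟨x, hx, rfl⟩
    exact (mem_dualAnnihilator _).2 (hS x hx)
  calc 2 * finrank K (S.map B) = finrank K (S.map B) + finrank K (S.map B) := two_mul _
    _ ≤ finrank K S + finrank K S.dualAnnihilator :=
        add_le_add (finrank_map_le B S) (finrank_mono hann)
    _ = finrank K E := Subspace.finrank_add_finrank_dualAnnihilator_eq S

theorem exists_finset_forall_eq_zero_of_isotropic (B : LinearMap.BilinForm K E) (x : ι → E)
    (hx : ∀ i j, B (x i) (x j) = 0) :
    ∃ s : Finset ι, 2 * s.card ≤ finrank K E ∧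
      ∀ y, (∀ i ∈ s, B (x i) y = 0) → ∀ i, B (x i) y = 0 := by
  have hisotropic : ∀ a ∈ span K (Set.range x), ∀ b ∈ span K (Set.range x), B a b = 0 := by
    intro a ha b hb
    induction ha, hb using span_induction₂ with
    | mem_mem a b ha hb =>
      obtain ⟨i, rfl⟩ := ha
      obtain ⟨j, rfl⟩ := hb
      exact hx i j
    | _ => simp_all
  have hmap : (span K (Set.range x)).map B = span K (Set.range (B ∘ x)) := by
    rw [map_span, Set.range_comp]
  obtain ⟨s, hcard, hspan⟩ := exists_finset_card_eq_finrank_span_image_eq (K := K) (B ∘ x)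
  refine ⟨s, ?_, fun y hy i => ?_⟩
  · rw [hcard, ← hmap]
    exact two_mul_finrank_map_le_of_isotropic B _ hisotropic
  · have hle : span K (Set.range (B ∘ x)) ≤ LinearMap.ker (LinearMap.applyₗ y) := by
      rw [← hspan, span_le]
      rintro _ ⟨j, hj, rfl⟩
      exact hy j hj
    exact hle (subset_span ⟨i, rfl⟩)

end BilinearForms

section WedgePairing

variable {R M N : Type*} [CommRing R] [AddCommGroup M] [Module R M] [AddCommGroup N] [Module R N]
  {m n : ℕ}

/-- The pairing `(x, y) ↦ ω (x ∧ y)` between `⋀ᵐ M` and `⋀ⁿ M` given by an alternating map `ω` of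
degree `m + n`, regarded as a linear map on `⋀ᵐ⁺ⁿ M`. For `ω` a volume form it detects whether two
subspaces meet. -/
noncomputable def wedgePairing (ω : M [⋀^Fin (m + n)]→ₗ[R] N) :
    ⋀[R]^m M →ₗ[R] ⋀[R]^n M →ₗ[R] N :=
  (DirectSum.gMulLHom R (fun i => ⋀[R]^i M)).compr₂ (exteriorPower.alternatingMapLinearEquiv ω)

theorem wedgePairing_ιMulti (ω : M [⋀^Fin (m + n)]→ₗ[R] N) (a : Fin m → M) (b : Fin n → M) :
    wedgePairing ω (exteriorPower.ιMulti R m a) (exteriorPower.ιMulti R n b) =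
      ω (Fin.append a b) := by
  have hmul : DirectSum.gMulLHom R (fun i => ⋀[R]^i M) (exteriorPower.ιMulti R m a)
      (exteriorPower.ιMulti R n b) = exteriorPower.ιMulti R (m + n) (Fin.append a b) :=
    Subtype.ext (ExteriorAlgebra.ιMulti_mul_ιMulti a b)
  rw [wedgePairing, LinearMap.compr₂_apply, hmul,
    exteriorPower.alternatingMapLinearEquiv_apply_ιMulti]

end WedgePairing

section GenericProjection

universe u v w

variable {K : Type u} {V : Type v} [Field K] [AddCommGroup V] [Module K V] {κ : Type w}

/-- The linear map from `V` to `κ`-indexed coordinates whose matrix in the basis `b` has independent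
indeterminates as entries. Every linear map `V → κ → K` is a specialization of it, so it puts the
subspaces of `V` in general position, over finite fields as well. -/
noncomputable def genericProjection {ι : Type*} (b : Basis ι K V) (κ : Type*) :
    V →ₗ[K] κ → MvPolynomial (ι × κ) K :=
  b.constr K fun i j => MvPolynomial.X (i, j)

theorem eval_genericProjection {ι : Type*} (b : Basis ι K V) (T : V →ₗ[K] κ → K) (x : V) (j : κ) :
    MvPolynomial.eval (fun p : ι × κ => T (b p.1) p.2) (genericProjection b κ x j) = T x j := by
  have h : (MvPolynomial.aeval fun p : ι × κ => T (b p.1) p.2).toLinearMap ∘ₗ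
      LinearMap.proj j ∘ₗ genericProjection b κ = LinearMap.proj j ∘ₗ T :=
    b.ext fun i => by simp [genericProjection]
  exact LinearMap.congr_fun h x

theorem exists_linearMap_apply_eq_single {v : κ → V} (hv : LinearIndependent K v) :
    ∃ T : V →ₗ[K] κ →₀ K, ∀ i, T (v i) = Finsupp.single i 1 := by
  obtain ⟨T, hT⟩ := (Finsupp.linearCombination K v).exists_leftInverse_of_injective
    (LinearMap.ker_eq_bot.2 hv)
  exact ⟨T, fun i => by simpa using LinearMap.congr_fun hT (Finsupp.single i 1)⟩

theorem linearIndependent_iff_detRowAlternating_ne_zero [Fintype κ] [DecidableEq κ]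
    {v : κ → κ → K} :
    LinearIndependent K v ↔ Matrix.detRowAlternating v ≠ 0 := by
  rw [← isUnit_iff_ne_zero]
  exact Matrix.linearIndependent_rows_iff_isUnit.trans (Matrix.isUnit_iff_isUnit_det (Matrix.of v))

theorem det_genericProjection_ne_zero [Fintype κ] [DecidableEq κ] {ι : Type*} (b : Basis ι K V)
    {v : κ → V} (hv : LinearIndependent K v) : (Matrix.of (genericProjection b κ ∘ v)).det ≠ 0 := by
  obtain ⟨T₀, hT₀⟩ := exists_linearMap_apply_eq_single hv
  let T : V →ₗ[K] κ → K := Finsupp.lcoeFun ∘ₗ T₀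
  have hT (i : κ) : T (v i) = Pi.single i 1 := by
    simp only [T, LinearMap.comp_apply, hT₀, Finsupp.lcoeFun_apply, Finsupp.single_eq_pi_single]
  have hmat : (MvPolynomial.eval fun p : ι × κ => T (b p.1) p.2).mapMatrix
      (Matrix.of (genericProjection b κ ∘ v)) = 1 := by
    ext i j
    simp [eval_genericProjection, hT, Matrix.one_apply, Pi.single_apply, eq_comm]
  intro h
  simpa only [← RingHom.map_det, h, map_zero, Matrix.det_one, zero_ne_one] using
    congrArg Matrix.det hmat

theorem exists_field_linearMap_linearIndependent_iff (K : Type u) (V : Type v) [Field K]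
    [AddCommGroup V] [Module K V] (κ : Type w) [Finite κ] :
    ∃ (L : Type (max u v w)) (_ : Field L) (_ : Algebra K L) (φ : V →ₗ[K] κ → L),
      ∀ v : κ → V, LinearIndependent L (φ ∘ v) ↔ LinearIndependent K v := by
  classical
  have := Fintype.ofFinite κ
  let b := Basis.ofVectorSpace K V
  let R := MvPolynomial (Basis.ofVectorSpaceIndex K V × κ) K
  let L := FractionRing R
  let φ : V →ₗ[K] κ → L :=
    ((IsScalarTower.toAlgHom K R L).toLinearMap.compLeft κ) ∘ₗ genericProjection b κ
  refine ⟨L, inferInstance, inferInstance, φ, fun v => ⟨fun h => ?_, fun h => ?_⟩⟩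
  · exact (h.restrict_scalars' K).of_comp φ
  · have hdet : algebraMap R L (Matrix.of (genericProjection b κ ∘ v)).det =
        Matrix.detRowAlternating (φ ∘ v) := RingHom.map_det _ _
    rw [linearIndependent_iff_detRowAlternating_ne_zero, ← hdet]
    exact (map_ne_zero_iff _ (IsFractionRing.injective R L)).2 (det_genericProjection_ne_zero b h)

end GenericProjection

theorem comp_append {α β : Type*} {m n : ℕ} (f : α → β) (a : Fin m → α) (b : Fin n → α) :
    f ∘ Fin.append a b = Fin.append (f ∘ a) (f ∘ b) := by
  ext i
  cases i using Fin.addCases <;> simp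

section Frames

variable {K V : Type*} [Field K] [AddCommGroup V] [Module K V]

theorem linearIndependent_append_iff {m n : ℕ} {a : Fin m → V} {b : Fin n → V} :
    LinearIndependent K (Fin.append a b) ↔ LinearIndependent K a ∧ LinearIndependent K b ∧
      Disjoint (span K (Set.range a)) (span K (Set.range b)) := by
  rw [← linearIndependent_equiv finSumFinEquiv, linearIndependent_sum]
  simp [Function.comp_def]

theorem exists_finset_forall_not_linearIndependent_append {ι : Type*} {k : ℕ}
    (v : ι → Fin k → V) (hv : ∀ i j, ¬ LinearIndependent K (Fin.append (v i) (v j))) :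
    ∃ s : Finset ι, 2 * s.card ≤ k.centralBinom ∧ ∀ w : Fin k → V,
      (∀ i ∈ s, ¬ LinearIndependent K (Fin.append (v i) w)) →
        ∀ i, ¬ LinearIndependent K (Fin.append (v i) w) := by
  obtain ⟨L, _, _, φ, hφ⟩ := exists_field_linearMap_linearIndependent_iff K V (Fin (k + k))
  let B : LinearMap.BilinForm L (⋀[L]^k (Fin (k + k) → L)) :=
    wedgePairing Matrix.detRowAlternating
  let P (a : Fin k → V) : ⋀[L]^k (Fin (k + k) → L) := exteriorPower.ιMulti L k (φ ∘ a)
  have hB (a b : Fin k → V) : B (P a) (P b) = 0 ↔ ¬ LinearIndependent K (Fin.append a b) := by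
    rw [wedgePairing_ιMulti, ← comp_append, ← hφ, linearIndependent_iff_detRowAlternating_ne_zero,
      not_not]
  have hfinrank : finrank L (⋀[L]^k (Fin (k + k) → L)) = k.centralBinom := by
    rw [exteriorPower.finrank_eq, finrank_fin_fun, ← two_mul, Nat.centralBinom]
  obtain ⟨s, hcard, hs⟩ := exists_finset_forall_eq_zero_of_isotropic B (P ∘ v)
    fun i j => (hB _ _).2 (hv i j)
  refine ⟨s, hfinrank ▸ hcard, fun w hw i => (hB _ _).1 (hs (P w) (fun j hj => ?_) i)⟩
  exact (hB _ _).2 (hw j hj)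

theorem exists_linearIndependent_span_range_eq {U : Submodule K V} [FiniteDimensional K U] {k : ℕ}
    (hU : finrank K U = k) :
    ∃ u : Fin k → V, LinearIndependent K u ∧ span K (Set.range u) = U := by
  let b := finBasisOfFinrankEq K U hU
  refine ⟨U.subtype ∘ b, b.linearIndependent.map' U.subtype U.ker_subtype, ?_⟩
  rw [Set.range_comp, span_image, b.span_eq, map_subtype_top]

end Frames

theorem centralBinom_eq_two_mul_choose_pred {k : ℕ} (hk : 1 ≤ k) :
    k.centralBinom = 2 * (2 * k - 1).choose (k - 1) := by
  obtain ⟨m, rfl⟩ := Nat.exists_eq_add_of_le' hk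
  rw [Nat.centralBinom, show 2 * (m + 1) = 2 * m + 1 + 1 by ring, Nat.choose_succ_succ,
    Nat.choose_symm_half, ← two_mul]
  rfl

section Intersecting

variable {K V : Type*} [Field K] [AddCommGroup V] [Module K V] {k : ℕ}

theorem exists_finset_subset_forall_not_disjoint (hk : 1 ≤ k) {𝓕 : Set (Submodule K V)}
    (hdim : ∀ U ∈ 𝓕, finrank K U = k) (hint : 𝓕.Intersecting) :
    ∃ 𝓕₀ : Finset (Submodule K V), ↑𝓕₀ ⊆ 𝓕 ∧ 𝓕₀.card ≤ (2 * k - 1).choose (k - 1) ∧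
      ∀ W : Submodule K V, finrank K W = k → (∀ U ∈ 𝓕₀, ¬ Disjoint W U) →
        ∀ U ∈ 𝓕, ¬ Disjoint W U := by
  have hframe (U : Submodule K V) (hU : finrank K U = k) :
      ∃ u : Fin k → V, LinearIndependent K u ∧ span K (Set.range u) = U :=
    have := FiniteDimensional.of_finrank_pos (hU ▸ hk : 0 < finrank K U)
    exists_linearIndependent_span_range_eq hU
  choose v hv hspan using fun U : 𝓕 => hframe U (hdim U U.2)
  obtain ⟨s, hcard, hs⟩ := exists_finset_forall_not_linearIndependent_append (K := K) v
    fun U U' h => hint U.2 U'.2 (by simpa only [hspan] using (linearIndependent_append_iff.1 h).2.2)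
  refine ⟨s.map (Function.Embedding.subtype _), by simp, ?_, fun W hW hWs U hU hdisj => ?_⟩
  · rw [centralBinom_eq_two_mul_choose_pred hk] at hcard
    rw [Finset.card_map]
    exact Nat.le_of_mul_le_mul_left hcard two_pos
  · obtain ⟨w, hw, rfl⟩ := hframe W hW
    have happend (U : 𝓕) : LinearIndependent K (Fin.append (v U) w) ↔
        Disjoint (span K (Set.range w)) (U : Submodule K V) := by
      rw [linearIndependent_append_iff, hspan, disjoint_comm]
      simp only [hv, hw, true_and]
    refine hs w (fun U hU => ?_) ⟨U, hU⟩ ((happend _).2 hdisj)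
    rw [happend]
    exact hWs U (Finset.mem_map_of_mem _ hU)

theorem maximal_intersecting_family_of_subspaces_has_small_generating_set_general
    (hk : 1 ≤ k) {𝓕 : Set (Submodule K V)}
    (h𝓕 : Maximal (fun 𝓖 : Set (Submodule K V) =>
      (∀ U ∈ 𝓖, finrank K U = k) ∧ 𝓖.Intersecting) 𝓕) :
    ∃ 𝓕₀ : Finset (Submodule K V), ↑𝓕₀ ⊆ 𝓕 ∧ 𝓕₀.card ≤ (2 * k - 1).choose (k - 1) ∧
      ∀ W : Submodule K V, W ∈ 𝓕 ↔ finrank K W = k ∧ ∀ U ∈ 𝓕₀, ¬ Disjoint W U := by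
  obtain ⟨⟨hdim, hint⟩, hmax⟩ := h𝓕
  obtain ⟨𝓕₀, hsub, hcard, hgen⟩ := exists_finset_subset_forall_not_disjoint hk hdim hint
  refine ⟨𝓕₀, hsub, hcard, fun W => ⟨fun hW => ⟨hdim W hW, fun U hU => hint hW (hsub hU)⟩, ?_⟩⟩
  rintro ⟨hWdim, hW⟩
  have hWbot : W ≠ ⊥ := by
    rintro rfl
    rw [finrank_bot] at hWdim
    omega
  have hinsert : (insert W 𝓕).Intersecting := hint.insert hWbot (hgen W hWdim hW)
  exact hmax ⟨Set.forall_mem_insert.2 ⟨hWdim, hdim⟩, hinsert⟩ (Set.subset_insert W 𝓕)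
    (Set.mem_insert W 𝓕)

end Intersecting

theorem maximal_coe_of_forall_finset {α : Type*} [Finite α] {P : Set α → Prop} {s : Finset α}
    (hs : P s) (hmax : ∀ t : Finset α, P t → s ⊆ t → s = t) : Maximal P (s : Set α) := by
  refine ⟨hs, fun t ht hst => ?_⟩
  lift t to Finset α using t.toFinite
  rw [hmax t ht (Finset.coe_subset.1 hst)]

theorem one_le_finrank_inf_iff {K V : Type*} [Field K] [AddCommGroup V] [Module K V]
    [FiniteDimensional K V] {U W : Submodule K V} :
    1 ≤ finrank K ↥(U ⊓ W) ↔ ¬ Disjoint U W := by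
  rw [Nat.one_le_iff_ne_zero, Ne, finrank_eq_zero, disjoint_iff]

theorem isIntersectingFam_iff_intersecting {K : Type*} [Field K] {n : ℕ}
    {𝓕 : Finset (Submodule K (Fin n → K))} :
    IsIntersectingFam 𝓕 ↔ (𝓕 : Set (Submodule K (Fin n → K))).Intersecting := by
  simp only [IsIntersectingFam, Set.Intersecting, one_le_finrank_inf_iff, Finset.mem_coe]

theorem maximal_intersecting_family_of_subspaces_has_small_generating_set
    (q n k : ℕ) (hq : IsPrimePow q) (hk : 1 ≤ k) (hkn : k < n)
    (K : Type) [Field K] [Fintype K] (hK : Fintype.card K = q)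
    (𝓕 : Finset (Submodule K (Fin n → K)))
    (hdim : ∀ U ∈ 𝓕, Module.finrank K ↥U = k) (hint : IsIntersectingFam 𝓕)
    (hmax : ∀ 𝓖 : Finset (Submodule K (Fin n → K)),
      (∀ U ∈ 𝓖, Module.finrank K ↥U = k) → IsIntersectingFam 𝓖 → 𝓕 ⊆ 𝓖 → 𝓕 = 𝓖) :
    ∃ 𝓕₀ ⊆ 𝓕, 𝓕₀.card ≤ (2 * k - 1).choose (k - 1) ∧
      ∀ W : Submodule K (Fin n → K),
        W ∈ 𝓕 ↔ (Module.finrank K ↥W = k ∧ ∀ U ∈ 𝓕₀, 1 ≤ Module.finrank K ↥(W ⊓ U)) := by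
  simp only [isIntersectingFam_iff_intersecting, one_le_finrank_inf_iff] at hint hmax ⊢
  exact maximal_intersecting_family_of_subspaces_has_small_generating_set_general hk
    (maximal_coe_of_forall_finset ⟨hdim, hint⟩ fun 𝓖 h𝓖 => hmax 𝓖 h𝓖.1 h𝓖.2)
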